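/- arXiv:2002.09795 — 2 statements merged into one kernel-verified Lean document; each statement's English description precedes it below -/
import Mathlib

section
/- For all functions Q, Q_k : S×A → ℝ, the second moment of the stochastic gradient satisfies Σ_{(s,a,s')} d(s,a)·P s a s' · ‖g(Q; Q_k, (s,a,s'))‖₂² ≤ 12γ²·|S|·|A|·‖Q* − Q_k‖_∞² + 8·‖∇F_{𝒯Q_k}(Q)‖_{D⁻¹}² + 18·|S|·|A|/(1−γ)². -/
open MeasureTheory ProbabilityTheory Finset

/-- sup norm of a real function on a finite nonempty type. -/
noncomputable def supNorm {ι : Type*} [Fintype ι] [Nonempty ι] (f : ι → ℝ) : ℝ :=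
  Finset.univ.sup' Finset.univ_nonempty (fun i => |f i|)

/-- squared Euclidean norm of a real function on a finite type. -/
def sqNorm {ι : Type*} [Fintype ι] (f : ι → ℝ) : ℝ := ∑ i, (f i) ^ 2

/-- Bellman optimality operator. -/
noncomputable def bellman {S A : Type*} [Fintype S] [Fintype A] [Nonempty A]
    (P : S → A → S → ℝ) (r : S → A → ℝ) (γ : ℝ) (Q : S × A → ℝ) : S × A → ℝ :=
  fun x => r x.1 x.2 + γ * ∑ s' : S, P x.1 x.2 s' *
    Finset.univ.sup' Finset.univ_nonempty (fun a' => Q (s', a'))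


/-- Stochastic gradient for sample `(s,a,s')`: zero except at coordinate `(s,a)`,
where it takes the value `Q(s,a) - r(s,a) - γ·max_{a'} Qk(s',a')`. -/
noncomputable def sgrad {S A : Type*} [Fintype A] [Nonempty A] [DecidableEq S] [DecidableEq A]
    (r : S → A → ℝ) (γ : ℝ) (Q Qk : S × A → ℝ) (smp : S × A × S) : S × A → ℝ :=
  fun x => if x = (smp.1, smp.2.1) then
      Q (smp.1, smp.2.1) - r smp.1 smp.2.1
        - γ * Finset.univ.sup' Finset.univ_nonempty (fun a' => Qk (smp.2.2, a'))
    else 0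

/-- squared `D`-weighted norm. -/
def DnormSq {S A : Type*} [Fintype S] [Fintype A] (d : S × A → ℝ) (f : S × A → ℝ) : ℝ :=
  ∑ x, d x * (f x) ^ 2

/-!
Conditionally on `(s, a)`, the only nonzero coordinate of the gradient has mean
`Q(s, a) - (𝒯 Qₖ)(s, a)` and variance at most `γ² ‖Qₖ‖²`, so the second moment is at most
`‖Q - 𝒯 Qₖ‖_D² + γ² ‖Qₖ‖²`, with no factor `|S| |A|`. The term `‖Q - 𝒯 Qₖ‖_D²` is the squared
`D⁻¹`-norm of the gradient of `F`, and `‖Qₖ‖ ≤ ‖Q* - Qₖ‖ + ‖Q*‖` with `‖Q*‖ ≤ ‖r‖ / (1 - γ)`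
because `‖𝒯 Q‖ ≤ ‖r‖ + γ ‖Q‖`.
-/

/-- The greedy state value `V_Q(s) = max_a Q(s, a)` entering the Bellman target. -/
noncomputable def greedyValue {S A : Type*} [Fintype A] [Nonempty A] (Q : S × A → ℝ) : S → ℝ :=
  fun s => Finset.univ.sup' Finset.univ_nonempty fun a => Q (s, a)

theorem supNorm_eq_norm {ι : Type*} [Fintype ι] [Nonempty ι] (f : ι → ℝ) : supNorm f = ‖f‖ :=
  le_antisymm (Finset.sup'_le _ _ fun i _ => norm_le_pi_norm f i)
    ((pi_norm_le_iff_of_nonempty f).2 fun i => Finset.le_sup' (|f ·|) (Finset.mem_univ i))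

theorem sum_mul_const_sub_sq {ι R : Type*} [Fintype ι] [CommRing R] {p : ι → R}
    (hp1 : ∑ i, p i = 1) (c : R) (f : ι → R) :
    ∑ i, p i * (c - f i) ^ 2 =
      (c - ∑ i, p i * f i) ^ 2 + (∑ i, p i * f i ^ 2 - (∑ i, p i * f i) ^ 2) :=
  calc ∑ i, p i * (c - f i) ^ 2
      = ∑ i, (c ^ 2 * p i - 2 * c * (p i * f i) + p i * f i ^ 2) :=
        Finset.sum_congr rfl fun i _ => by ring
    _ = c ^ 2 * ∑ i, p i - 2 * c * ∑ i, p i * f i + ∑ i, p i * f i ^ 2 := by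
        rw [Finset.sum_add_distrib, Finset.sum_sub_distrib, ← Finset.mul_sum, ← Finset.mul_sum]
    _ = (c - ∑ i, p i * f i) ^ 2 + (∑ i, p i * f i ^ 2 - (∑ i, p i * f i) ^ 2) := by
        rw [hp1]
        ring

section WeightedAverage

variable {ι : Type*} [Fintype ι] {p : ι → ℝ}

theorem abs_sum_mul_le_norm (hp0 : ∀ i, 0 ≤ p i) (hp1 : ∑ i, p i = 1) (f : ι → ℝ) :
    |∑ i, p i * f i| ≤ ‖f‖ :=
  calc |∑ i, p i * f i| ≤ ∑ i, |p i * f i| := Finset.abs_sum_le_sum_abs _ _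
    _ = ∑ i, p i * ‖f i‖ := by simp only [abs_mul, abs_of_nonneg (hp0 _), Real.norm_eq_abs]
    _ ≤ ∑ i, p i * ‖f‖ := by
        gcongr with i
        · exact hp0 i
        · exact norm_le_pi_norm f i
    _ = ‖f‖ := by rw [← Finset.sum_mul, hp1, one_mul]

theorem sum_mul_const_sub_sq_le (hp0 : ∀ i, 0 ≤ p i) (hp1 : ∑ i, p i = 1) (c : ℝ) (f : ι → ℝ) :
    ∑ i, p i * (c - f i) ^ 2 ≤ (c - ∑ i, p i * f i) ^ 2 + ‖f‖ ^ 2 := by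
  have second_moment_le : ∑ i, p i * f i ^ 2 ≤ ‖f‖ ^ 2 :=
    (le_abs_self _).trans ((abs_sum_mul_le_norm hp0 hp1 (f ^ 2)).trans (norm_pow_le' f two_pos))
  rw [sum_mul_const_sub_sq hp1]
  linarith [sq_nonneg (∑ i, p i * f i)]

end WeightedAverage

theorem sum_mul_sq_div_eq_DnormSq {S A : Type*} [Fintype S] [Fintype A] {d : S × A → ℝ}
    (hd : ∀ x, d x ≠ 0) (f : S × A → ℝ) : ∑ x, (d x * f x) ^ 2 / d x = DnormSq d f :=
  Finset.sum_congr rfl fun x _ => by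
    have := hd x
    field_simp

theorem DnormSq_nonneg {S A : Type*} [Fintype S] [Fintype A] {d : S × A → ℝ}
    (hd0 : ∀ x, 0 ≤ d x) (f : S × A → ℝ) : 0 ≤ DnormSq d f :=
  Finset.sum_nonneg fun x _ => mul_nonneg (hd0 x) (sq_nonneg (f x))

section MarkovDecisionProcess

variable {S A : Type*} [Fintype S] [Fintype A] [Nonempty A]
  {P : S → A → S → ℝ} {r : S → A → ℝ} {γ : ℝ}

theorem norm_greedyValue_le (Q : S × A → ℝ) : ‖greedyValue Q‖ ≤ ‖Q‖ := by
  refine (pi_norm_le_iff_of_nonneg (norm_nonneg Q)).2 fun s => ?_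
  obtain ⟨a, -, ha⟩ :=
    Finset.exists_mem_eq_sup' Finset.univ_nonempty fun a => Q (s, a)
  rw [greedyValue, ha]
  exact norm_le_pi_norm Q (s, a)

theorem norm_bellman_le (hP0 : ∀ s a s', 0 ≤ P s a s') (hP1 : ∀ s a, ∑ s', P s a s' = 1)
    (Q : S × A → ℝ) : ‖bellman P r γ Q‖ ≤ ‖r‖ + |γ| * ‖Q‖ := by
  refine (pi_norm_le_iff_of_nonneg (by positivity)).2 fun ⟨s, a⟩ => ?_
  have reward_le : |r s a| ≤ ‖r‖ := (norm_le_pi_norm (r s) a).trans (norm_le_pi_norm r s)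
  have expected_value_le : |∑ s', P s a s' * greedyValue Q s'| ≤ ‖Q‖ :=
    (abs_sum_mul_le_norm (hP0 s a) (hP1 s a) _).trans (norm_greedyValue_le Q)
  calc |r s a + γ * ∑ s', P s a s' * greedyValue Q s'|
      ≤ |r s a| + |γ| * |∑ s', P s a s' * greedyValue Q s'| := by
        rw [← abs_mul]
        exact abs_add_le _ _
    _ ≤ ‖r‖ + |γ| * ‖Q‖ := by gcongr

theorem norm_le_of_bellman_eq (hP0 : ∀ s a s', 0 ≤ P s a s')
    (hP1 : ∀ s a, ∑ s', P s a s' = 1) (hγ : |γ| < 1) {Q : S × A → ℝ}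
    (hQ : bellman P r γ Q = Q) : ‖Q‖ ≤ ‖r‖ / (1 - |γ|) := by
  have self_bound : ‖Q‖ ≤ ‖r‖ + |γ| * ‖Q‖ := by
    simpa only [hQ] using norm_bellman_le (r := r) (γ := γ) hP0 hP1 Q
  rw [le_div_iff₀ (sub_pos.2 hγ)]
  linarith

variable [DecidableEq S] [DecidableEq A]

theorem sqNorm_sgrad (Q Qk : S × A → ℝ) (s : S) (a : A) (s' : S) :
    sqNorm (sgrad r γ Q Qk (s, a, s')) = (Q (s, a) - r s a - γ * greedyValue Qk s') ^ 2 := by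
  simp only [sqNorm, sgrad, greedyValue, ite_pow, ne_eq, OfNat.ofNat_ne_zero, not_false_eq_true,
    zero_pow, Finset.sum_ite_eq', Finset.mem_univ, if_true]

theorem sum_mul_sqNorm_sgrad_le {s : S} {a : A} (hP0 : ∀ s', 0 ≤ P s a s')
    (hP1 : ∑ s', P s a s' = 1) (Q Qk : S × A → ℝ) :
    ∑ s', P s a s' * sqNorm (sgrad r γ Q Qk (s, a, s')) ≤
      (Q (s, a) - bellman P r γ Qk (s, a)) ^ 2 + γ ^ 2 * ‖Qk‖ ^ 2 :=
  calc ∑ s', P s a s' * sqNorm (sgrad r γ Q Qk (s, a, s'))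
      = ∑ s', P s a s' * (Q (s, a) - r s a - (γ • greedyValue Qk) s') ^ 2 := by
        simp only [sqNorm_sgrad, Pi.smul_apply, smul_eq_mul]
    _ ≤ (Q (s, a) - r s a - ∑ s', P s a s' * (γ • greedyValue Qk) s') ^ 2
          + ‖γ • greedyValue Qk‖ ^ 2 :=
        sum_mul_const_sub_sq_le hP0 hP1 _ _
    _ = (Q (s, a) - bellman P r γ Qk (s, a)) ^ 2 + γ ^ 2 * ‖greedyValue Qk‖ ^ 2 := by
        simp only [bellman, greedyValue, Pi.smul_apply, smul_eq_mul, mul_left_comm _ γ,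
          ← Finset.mul_sum, sub_sub, norm_smul, Real.norm_eq_abs, mul_pow, sq_abs]
    _ ≤ (Q (s, a) - bellman P r γ Qk (s, a)) ^ 2 + γ ^ 2 * ‖Qk‖ ^ 2 := by
        gcongr
        exact norm_greedyValue_le Qk

theorem sgrad_second_moment_le_norm_sq (hP0 : ∀ s a s', 0 ≤ P s a s')
    (hP1 : ∀ s a, ∑ s', P s a s' = 1) {d : S × A → ℝ} (hd0 : ∀ x, 0 ≤ d x)
    (hd1 : ∑ x, d x = 1) (Q Qk : S × A → ℝ) :
    ∑ smp : S × A × S, d (smp.1, smp.2.1) * P smp.1 smp.2.1 smp.2.2 *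
        sqNorm (sgrad r γ Q Qk smp) ≤
      DnormSq d (Q - bellman P r γ Qk) + γ ^ 2 * ‖Qk‖ ^ 2 :=
  calc ∑ smp : S × A × S, d (smp.1, smp.2.1) * P smp.1 smp.2.1 smp.2.2 *
        sqNorm (sgrad r γ Q Qk smp)
      = ∑ x : S × A, d x * ∑ s', P x.1 x.2 s' * sqNorm (sgrad r γ Q Qk (x.1, x.2, s')) := by
        simp only [Fintype.sum_prod_type, Finset.mul_sum, mul_assoc]
    _ ≤ ∑ x, d x * ((Q x - bellman P r γ Qk x) ^ 2 + γ ^ 2 * ‖Qk‖ ^ 2) := by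
        gcongr with x
        · exact hd0 x
        · exact sum_mul_sqNorm_sgrad_le (hP0 x.1 x.2) (hP1 x.1 x.2) Q Qk
    _ = DnormSq d (Q - bellman P r γ Qk) + γ ^ 2 * ‖Qk‖ ^ 2 := by
        simp only [mul_add, Finset.sum_add_distrib, ← Finset.sum_mul, hd1, one_mul, DnormSq,
          Pi.sub_apply]

theorem sgrad_second_moment_bound_general (hP0 : ∀ s a s', 0 ≤ P s a s')
    (hP1 : ∀ s a, ∑ s', P s a s' = 1) (hγ : |γ| < 1) {Qstar : S × A → ℝ}
    (hQstar : bellman P r γ Qstar = Qstar) {d : S × A → ℝ} (hd0 : ∀ x, 0 ≤ d x)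
    (hd1 : ∑ x, d x = 1) (Q Qk : S × A → ℝ) :
    ∑ smp : S × A × S, d (smp.1, smp.2.1) * P smp.1 smp.2.1 smp.2.2 *
        sqNorm (sgrad r γ Q Qk smp) ≤
      2 * γ ^ 2 * ‖Qstar - Qk‖ ^ 2 + DnormSq d (Q - bellman P r γ Qk)
        + 2 * (‖r‖ / (1 - |γ|)) ^ 2 := by
  have norm_Qk_le : ‖Qk‖ ≤ ‖Qstar - Qk‖ + ‖r‖ / (1 - |γ|) :=
    calc ‖Qk‖ ≤ ‖Qstar - Qk‖ + ‖Qstar‖ := by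
          rw [add_comm]
          exact norm_le_norm_add_norm_sub Qstar Qk
      _ ≤ ‖Qstar - Qk‖ + ‖r‖ / (1 - |γ|) := by
          gcongr
          exact norm_le_of_bellman_eq hP0 hP1 hγ hQstar
  have norm_Qk_sq_le : γ ^ 2 * ‖Qk‖ ^ 2 ≤
      2 * γ ^ 2 * ‖Qstar - Qk‖ ^ 2 + 2 * (‖r‖ / (1 - |γ|)) ^ 2 :=
    calc γ ^ 2 * ‖Qk‖ ^ 2 ≤ γ ^ 2 * (2 * (‖Qstar - Qk‖ ^ 2 + (‖r‖ / (1 - |γ|)) ^ 2)) := by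
          gcongr
          exact (pow_le_pow_left₀ (norm_nonneg Qk) norm_Qk_le 2).trans add_sq_le
      _ = 2 * γ ^ 2 * ‖Qstar - Qk‖ ^ 2 + 2 * (γ ^ 2 * (‖r‖ / (1 - |γ|)) ^ 2) := by ring
      _ ≤ 2 * γ ^ 2 * ‖Qstar - Qk‖ ^ 2 + 2 * (‖r‖ / (1 - |γ|)) ^ 2 := by
          gcongr
          exact mul_le_of_le_one_left (sq_nonneg _) ((sq_le_one_iff_abs_le_one γ).2 hγ.le)
  linarith [sgrad_second_moment_le_norm_sq (r := r) (γ := γ) hP0 hP1 hd0 hd1 Q Qk]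

end MarkovDecisionProcess

theorem one_le_card_mul_card (S A : Type*) [Fintype S] [Fintype A] [Nonempty S] [Nonempty A] :
    (1 : ℝ) ≤ Fintype.card S * Fintype.card A :=
  one_le_mul_of_one_le_of_one_le (Nat.one_le_cast.2 Fintype.card_pos)
    (Nat.one_le_cast.2 Fintype.card_pos)

theorem sgrad_second_moment_bound
    {S A : Type*} [Fintype S] [Fintype A] [Nonempty S] [Nonempty A]
    [DecidableEq S] [DecidableEq A]
    (P : S → A → S → ℝ) (hP0 : ∀ s a s', 0 ≤ P s a s') (hP1 : ∀ s a, ∑ s', P s a s' = 1)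
    (r : S → A → ℝ) (hr : ∀ s a, |r s a| ≤ 1)
    (γ : ℝ) (hγ : γ ∈ Set.Ioo (0 : ℝ) 1)
    (Qstar : S × A → ℝ) (hQstar : bellman P r γ Qstar = Qstar)
    (d : S × A → ℝ) (hd0 : ∀ x, 0 < d x) (hd1 : ∑ x, d x = 1)
    (Q Qk : S × A → ℝ) :
    ∑ smp : S × A × S, d (smp.1, smp.2.1) * P smp.1 smp.2.1 smp.2.2 *
        sqNorm (sgrad r γ Q Qk smp) ≤
      12 * γ ^ 2 * (Fintype.card S : ℝ) * (Fintype.card A : ℝ) *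
          (supNorm (fun x => Qstar x - Qk x)) ^ 2
        + 8 * (∑ x, (d x * (Q x - bellman P r γ Qk x)) ^ 2 / d x)
        + 18 * (Fintype.card S : ℝ) * (Fintype.card A : ℝ) / (1 - γ) ^ 2 := by
  have norm_r_le : ‖r‖ ≤ 1 :=
    (pi_norm_le_iff_of_nonempty r).2 fun s => (pi_norm_le_iff_of_nonempty (r s)).2 (hr s)
  rw [supNorm_eq_norm, sum_mul_sq_div_eq_DnormSq (fun x => (hd0 x).ne')
    (fun x => Q x - bellman P r γ Qk x)]
  refine (sgrad_second_moment_bound_general hP0 hP1 ((abs_of_pos hγ.1).trans_lt hγ.2) hQstar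
    (fun x => (hd0 x).le) hd1 Q Qk).trans (add_le_add (add_le_add ?_ ?_) ?_)
  · calc 2 * γ ^ 2 * ‖Qstar - Qk‖ ^ 2 = 2 * (γ ^ 2 * ‖Qstar - Qk‖ ^ 2) * 1 := by ring
      _ ≤ 12 * (γ ^ 2 * ‖Qstar - Qk‖ ^ 2) * (Fintype.card S * Fintype.card A) := by
        gcongr
        · norm_num
        · exact one_le_card_mul_card S A
      _ = 12 * γ ^ 2 * Fintype.card S * Fintype.card A * ‖Qstar - Qk‖ ^ 2 := by ring
  · exact le_mul_of_one_le_left (DnormSq_nonneg (fun x => (hd0 x).le) _) (by norm_num)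
  · rw [abs_of_pos hγ.1, div_pow, ← mul_div_assoc, mul_assoc 18]
    gcongr
    · norm_num
    · exact (pow_le_one₀ (norm_nonneg r) norm_r_le).trans (one_le_card_mul_card S A)
end

section
/- Let ε ∈ (0,1]. Let Q_0, Q_1, …, Q_T : Ω → (S×A → ℝ) be random functions such that ‖Q_0 − Q*‖_∞ ≤ 2/(1−γ) almost surely, 𝔼[‖Q_i − 𝒯Q_{i−1}‖₂²] ≤ ε²·(1−γ)²/4 for every i ∈ {1,…,T}, and T ≥ ln(4/((1−γ)·ε))/ln(1/γ). Then 𝔼[‖Q_T − Q*‖_∞] ≤ ε. -/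
open MeasureTheory ProbabilityTheory Finset

/-!
Taking expectations in `dist (Q (k + 1)) x₀ ≤ dist (Q (k + 1)) (F (Q k)) + γ * dist (Q k) x₀`,
where `F` is a `γ`-contraction towards `x₀`, gives a linear recursion for the expected error. By
Jensen's inequality, the second-moment bound on the residuals makes its additive term at most
`ε (1 - γ) / 2`, so the residuals contribute at most `ε / 2` to the final error. The number of
iterations is chosen so that the initial error, shrunk by `γ ^ T`, contributes at most another
`ε / 2`.
-/

section Norms

variable {ι : Type*} [Fintype ι]

lemma supNorm_sub_eq_dist [Nonempty ι] (f g : ι → ℝ) :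
    supNorm (fun i => f i - g i) = dist f g := by
  refine le_antisymm (Finset.sup'_le _ _ fun i _ => dist_le_pi_dist f g i) ?_
  exact (dist_pi_le_iff' (f := f) (g := g)).2 fun i =>
    Finset.le_sup' (fun i => |f i - g i|) (Finset.mem_univ i)

lemma dist_sq_le_sqNorm_sub (f g : ι → ℝ) : dist f g ^ 2 ≤ sqNorm (fun i => f i - g i) := by
  have hnonneg : 0 ≤ sqNorm (fun i => f i - g i) := Finset.sum_nonneg fun i _ => sq_nonneg _
  refine (Real.le_sqrt dist_nonneg hnonneg).1 ?_
  refine (dist_pi_le_iff (Real.sqrt_nonneg _)).2 fun i => Real.abs_le_sqrt ?_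
  exact Finset.single_le_sum (f := fun i => (f i - g i) ^ 2) (fun i _ => sq_nonneg _)
    (Finset.mem_univ i)

end Norms

section Bellman

lemma sup'_le_sup'_add {ι G : Type*} [Add G] [SemilatticeSup G] [AddRightMono G]
    {s : Finset ι} (hs : s.Nonempty) {f g : ι → G} {c : G} (h : ∀ i ∈ s, f i ≤ g i + c) :
    s.sup' hs f ≤ s.sup' hs g + c :=
  Finset.sup'_le _ _ fun i hi => (h i hi).trans (by gcongr; exact Finset.le_sup' g hi)

lemma abs_sup'_sub_sup'_le {ι G : Type*} [AddCommGroup G] [LinearOrder G] [IsOrderedAddMonoid G]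
    {s : Finset ι} (hs : s.Nonempty) {f g : ι → G} {c : G} (h : ∀ i ∈ s, |f i - g i| ≤ c) :
    |s.sup' hs f - s.sup' hs g| ≤ c := by
  refine abs_sub_le_iff.2 ⟨sub_le_iff_le_add'.2 ?_, sub_le_iff_le_add'.2 ?_⟩ <;>
    refine sup'_le_sup'_add hs fun i hi => sub_le_iff_le_add'.1 ?_
  exacts [(abs_sub_le_iff.1 (h i hi)).1, (abs_sub_le_iff.1 (h i hi)).2]

lemma norm_sum_smul_le_of_sum_eq_one {ι E : Type*} [SeminormedAddCommGroup E] [NormedSpace ℝ E]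
    {s : Finset ι} {p : ι → ℝ} {x : ι → E} {c : ℝ} (hp0 : ∀ i ∈ s, 0 ≤ p i)
    (hp1 : ∑ i ∈ s, p i = 1) (hx : ∀ i ∈ s, ‖x i‖ ≤ c) : ‖∑ i ∈ s, p i • x i‖ ≤ c :=
  mem_closedBall_zero_iff.1 <| (convex_closedBall 0 c).sum_mem hp0 hp1 fun i hi =>
    mem_closedBall_zero_iff.2 (hx i hi)

lemma dist_bellman_le {S A : Type*} [Fintype S] [Fintype A] [Nonempty A]
    {P : S → A → S → ℝ} (hP0 : ∀ s a s', 0 ≤ P s a s') (hP1 : ∀ s a, ∑ s', P s a s' = 1)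
    (r : S → A → ℝ) {γ : ℝ} (hγ : 0 ≤ γ) (Q R : S × A → ℝ) :
    dist (bellman P r γ Q) (bellman P r γ R) ≤ γ * dist Q R := by
  let V (q : S × A → ℝ) (s : S) : ℝ := Finset.univ.sup' Finset.univ_nonempty fun a => q (s, a)
  have hV (s : S) : |V Q s - V R s| ≤ dist Q R :=
    abs_sup'_sub_sup'_le _ fun a _ => dist_le_pi_dist Q R (s, a)
  refine (dist_pi_le_iff (by positivity)).2 fun ⟨s, a⟩ => ?_
  calc dist (bellman P r γ Q (s, a)) (bellman P r γ R (s, a))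
      = γ * |∑ s', P s a s' * (V Q s' - V R s')| := by
        simp only [bellman, V, Real.dist_eq, add_sub_add_left_eq_sub, ← mul_sub,
          ← Finset.sum_sub_distrib, abs_mul, abs_of_nonneg hγ]
    _ ≤ γ * dist Q R := by
        gcongr
        exact norm_sum_smul_le_of_sum_eq_one (fun s' _ => hP0 s a s') (hP1 s a) fun s' _ =>
          (Real.norm_eq_abs _).trans_le (hV s')

end Bellman

section GeometricDecay

lemma le_pow_mul_add_div_of_le_mul_add {K : Type*} [Field K] [LinearOrder K]
    [IsStrictOrderedRing K] {u : ℕ → K} {γ δ : K} (hγ0 : 0 ≤ γ) (hγ1 : γ < 1) (hδ : 0 ≤ δ)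
    {n : ℕ} (hu : ∀ k < n, u (k + 1) ≤ γ * u k + δ) :
    u n ≤ γ ^ n * u 0 + δ / (1 - γ) := by
  have h1γ : 0 < 1 - γ := sub_pos.2 hγ1
  induction n with
  | zero => simpa using div_nonneg hδ h1γ.le
  | succ n ih =>
    calc u (n + 1) ≤ γ * u n + δ := hu n n.lt_succ_self
      _ ≤ γ * (γ ^ n * u 0 + δ / (1 - γ)) + δ := by
          gcongr
          exact ih fun k hk => hu k (hk.trans n.lt_succ_self)
      _ = γ ^ (n + 1) * u 0 + δ / (1 - γ) := by field_simp; ring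

lemma pow_mul_le_of_log_div_log_le {γ D η : ℝ} (hγ0 : 0 < γ) (hγ1 : γ < 1) (hD : 0 < D)
    (hη : 0 < η) {n : ℕ} (hn : Real.log (D / η) / Real.log (1 / γ) ≤ n) : γ ^ n * D ≤ η := by
  rw [Real.log_div_log, Real.logb_le_iff_le_rpow (one_lt_one_div hγ0 hγ1) (div_pos hD hη),
    Real.rpow_natCast, one_div_pow, div_le_div_iff₀ hη (pow_pos hγ0 n)] at hn
  linarith

end GeometricDecay

section Expectation

variable {Ω : Type*} [MeasurableSpace Ω] {μ : Measure Ω}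

lemma integral_le_of_ae_le_const [IsProbabilityMeasure μ] {f : Ω → ℝ} {c : ℝ}
    (hf : Integrable f μ) (h : ∀ᵐ ω ∂μ, f ω ≤ c) : ∫ ω, f ω ∂μ ≤ c := by
  simpa using integral_mono_ae hf (integrable_const c) h

lemma integrable_sqrt [IsFiniteMeasure μ] {f : Ω → ℝ} (hf : Integrable f μ) :
    Integrable (fun ω => √(f ω)) μ := by
  refine (hf.norm.add (integrable_const 1)).mono'
    (Real.continuous_sqrt.comp_aestronglyMeasurable hf.1) (.of_forall fun ω => ?_)
  rw [Real.norm_of_nonneg (Real.sqrt_nonneg _), Pi.add_apply, Real.sqrt_le_iff]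
  constructor <;> nlinarith [norm_nonneg (f ω), Real.le_norm_self (f ω)]

lemma integral_sqrt_le_sqrt_integral [IsProbabilityMeasure μ] {f : Ω → ℝ} (hf : Integrable f μ)
    (hf0 : 0 ≤ᵐ[μ] f) : ∫ ω, √(f ω) ∂μ ≤ √(∫ ω, f ω ∂μ) :=
  Real.strictConcaveOn_sqrt.concaveOn.le_map_integral Real.continuous_sqrt.continuousOn isClosed_Ici
    hf0 hf (integrable_sqrt hf)

variable {X : Type*} [PseudoMetricSpace X] {F : X → X} {x₀ : X} {γ : ℝ}

lemma integral_dist_le_mul_add (hF : ∀ x, dist (F x) x₀ ≤ γ * dist x x₀) {q q' : Ω → X} {ρ : Ω → ℝ}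
    (hq : Integrable (fun ω => dist (q ω) x₀) μ) (hq' : Integrable (fun ω => dist (q' ω) x₀) μ)
    (hρ : Integrable ρ μ) (hres : ∀ᵐ ω ∂μ, dist (q' ω) (F (q ω)) ≤ ρ ω) :
    ∫ ω, dist (q' ω) x₀ ∂μ ≤ γ * ∫ ω, dist (q ω) x₀ ∂μ + ∫ ω, ρ ω ∂μ := by
  rw [← integral_const_mul, ← integral_add (hq.const_mul γ) hρ]
  refine integral_mono_ae hq' ((hq.const_mul γ).add hρ) ?_
  filter_upwards [hres] with ω hω
  calc dist (q' ω) x₀ ≤ dist (q' ω) (F (q ω)) + dist (F (q ω)) x₀ := dist_triangle _ _ _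
    _ ≤ ρ ω + γ * dist (q ω) x₀ := add_le_add hω (hF _)
    _ = γ * dist (q ω) x₀ + ρ ω := add_comm _ _

lemma integral_dist_le_pow_mul_add_div [IsProbabilityMeasure μ]
    (hF : ∀ x, dist (F x) x₀ ≤ γ * dist x x₀) (hγ0 : 0 ≤ γ) (hγ1 : γ < 1) {δ : ℝ} (hδ : 0 ≤ δ)
    {T : ℕ} {Q : ℕ → Ω → X} {Z : ℕ → Ω → ℝ}
    (hQ : ∀ k ≤ T, Integrable (fun ω => dist (Q k ω) x₀) μ)
    (hres : ∀ k < T, ∀ᵐ ω ∂μ, dist (Q (k + 1) ω) (F (Q k ω)) ^ 2 ≤ Z k ω)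
    (hZ : ∀ k < T, Integrable (Z k) μ) (hmom : ∀ k < T, ∫ ω, Z k ω ∂μ ≤ δ ^ 2) :
    ∫ ω, dist (Q T ω) x₀ ∂μ ≤ γ ^ T * ∫ ω, dist (Q 0 ω) x₀ ∂μ + δ / (1 - γ) := by
  refine le_pow_mul_add_div_of_le_mul_add (u := fun k => ∫ ω, dist (Q k ω) x₀ ∂μ) hγ0 hγ1 hδ
    fun k hk => ?_
  have hZ0 : 0 ≤ᵐ[μ] Z k := (hres k hk).mono fun ω hω => (sq_nonneg _).trans hω
  have hsqrt : ∀ᵐ ω ∂μ, dist (Q (k + 1) ω) (F (Q k ω)) ≤ √(Z k ω) :=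
    (hres k hk).mono fun ω => Real.le_sqrt_of_sq_le
  calc ∫ ω, dist (Q (k + 1) ω) x₀ ∂μ
      ≤ γ * ∫ ω, dist (Q k ω) x₀ ∂μ + ∫ ω, √(Z k ω) ∂μ :=
        integral_dist_le_mul_add hF (hQ k hk.le) (hQ (k + 1) hk) (integrable_sqrt (hZ k hk)) hsqrt
    _ ≤ γ * ∫ ω, dist (Q k ω) x₀ ∂μ + δ := by
        gcongr
        exact (integral_sqrt_le_sqrt_integral (hZ k hk) hZ0).trans
          (Real.sqrt_le_iff.2 ⟨hδ, hmom k hk⟩)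

end Expectation

-- `Z` majorizes the squared residuals, which may fail to be measurable.
theorem outer_iteration_accuracy_general {X Ω : Type*} [PseudoMetricSpace X] [MeasurableSpace Ω]
    {μ : Measure Ω} [IsProbabilityMeasure μ] {F : X → X} {x₀ : X} {γ D ε : ℝ}
    (hγ : γ ∈ Set.Ioo (0 : ℝ) 1) (hF : ∀ x, dist (F x) x₀ ≤ γ * dist x x₀) (hD : 0 < D)
    (hε : 0 < ε) {T : ℕ} {Q : ℕ → Ω → X} {Z : ℕ → Ω → ℝ}
    (hQ : ∀ k ≤ T, Integrable (fun ω => dist (Q k ω) x₀) μ)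
    (hQ0 : ∫ ω, dist (Q 0 ω) x₀ ∂μ ≤ D)
    (hres : ∀ k < T, ∀ᵐ ω ∂μ, dist (Q (k + 1) ω) (F (Q k ω)) ^ 2 ≤ Z k ω)
    (hZ : ∀ k < T, Integrable (Z k) μ)
    (hmom : ∀ k < T, ∫ ω, Z k ω ∂μ ≤ ε ^ 2 * (1 - γ) ^ 2 / 4)
    (hT : Real.log (2 * D / ε) / Real.log (1 / γ) ≤ T) :
    ∫ ω, dist (Q T ω) x₀ ∂μ ≤ ε := by
  obtain ⟨hγ0, hγ1⟩ := hγ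
  have h1γ : 0 < 1 - γ := sub_pos.2 hγ1
  have hδ : 0 ≤ ε * (1 - γ) / 2 := by positivity
  have hinit : γ ^ T * D ≤ ε / 2 :=
    pow_mul_le_of_log_div_log_le hγ0 hγ1 hD (half_pos hε) (by rwa [div_div_eq_mul_div, mul_comm D])
  calc ∫ ω, dist (Q T ω) x₀ ∂μ
      ≤ γ ^ T * ∫ ω, dist (Q 0 ω) x₀ ∂μ + ε * (1 - γ) / 2 / (1 - γ) :=
        integral_dist_le_pow_mul_add_div hF hγ0.le hγ1 hδ hQ hres hZ fun k hk =>
          (hmom k hk).trans_eq (by ring)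
    _ ≤ γ ^ T * D + ε * (1 - γ) / 2 / (1 - γ) := by gcongr
    _ = γ ^ T * D + ε / 2 := by rw [mul_div_right_comm, mul_div_cancel_right₀ _ h1γ.ne']
    _ ≤ ε := by linarith

theorem outer_iteration_accuracy
    {S A : Type*} [Fintype S] [Fintype A] [Nonempty S] [Nonempty A]
    {Ω : Type*} [MeasurableSpace Ω] (μ : Measure Ω) [IsProbabilityMeasure μ]
    (P : S → A → S → ℝ) (hP0 : ∀ s a s', 0 ≤ P s a s') (hP1 : ∀ s a, ∑ s', P s a s' = 1)
    (r : S → A → ℝ) (hr : ∀ s a, |r s a| ≤ 1)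
    (γ : ℝ) (hγ : γ ∈ Set.Ioo (0 : ℝ) 1)
    (Qstar : S × A → ℝ) (hQstar : bellman P r γ Qstar = Qstar)
    (ε : ℝ) (hε : ε ∈ Set.Ioc (0 : ℝ) 1)
    (T : ℕ) (Q : ℕ → Ω → S × A → ℝ) (hQmeas : ∀ k, Measurable (Q k))
    (hQ0 : ∀ᵐ ω ∂μ, supNorm (fun x => Q 0 ω x - Qstar x) ≤ 2 / (1 - γ))
    (hmomInt : ∀ i ∈ Finset.Icc 1 T,
      Integrable (fun ω => sqNorm (fun x => Q i ω x - bellman P r γ (Q (i - 1) ω) x)) μ)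
    (hmom : ∀ i ∈ Finset.Icc 1 T,
      ∫ ω, sqNorm (fun x => Q i ω x - bellman P r γ (Q (i - 1) ω) x) ∂μ ≤
        ε ^ 2 * (1 - γ) ^ 2 / 4)
    (hT : Real.log (4 / ((1 - γ) * ε)) / Real.log (1 / γ) ≤ (T : ℝ))
    (hint : ∀ k, Integrable (fun ω => supNorm (fun x => Q k ω x - Qstar x)) μ) :
    ∫ ω, supNorm (fun x => Q T ω x - Qstar x) ∂μ ≤ ε := by
  have hF (q : S × A → ℝ) : dist (bellman P r γ q) Qstar ≤ γ * dist q Qstar := by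
    simpa only [hQstar] using dist_bellman_le hP0 hP1 r hγ.1.le q Qstar
  simp only [supNorm_sub_eq_dist] at hQ0 hint ⊢
  have hmem {k : ℕ} (hk : k < T) : k + 1 ∈ Finset.Icc 1 T := Finset.mem_Icc.2 ⟨by omega, hk⟩
  exact outer_iteration_accuracy_general hγ hF (div_pos two_pos (sub_pos.2 hγ.2)) hε.1
    (fun k _ => hint k) (integral_le_of_ae_le_const (hint 0) hQ0)
    (fun k _ => .of_forall fun ω => dist_sq_le_sqNorm_sub (Q (k + 1) ω) (bellman P r γ (Q k ω)))
    (fun k hk => hmomInt (k + 1) (hmem hk)) (fun k hk => hmom (k + 1) (hmem hk))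
    (by rwa [← mul_div_assoc, div_div, show (2 : ℝ) * 2 = 4 by norm_num])
end
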